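/- arXiv:2211.00432 — 2 statements merged into one kernel-verified Lean document; each statement's English description precedes it below -/
import Mathlib

section
/- Let E be a τ*-Baire Hausdorff space, F a Hausdorff space, and f : E → F a continuous nearly open surjection. Suppose f factors as f = g ∘ h, where h : E → G is a continuous surjection onto a semi-regular Hausdorff space G and g : G → F is a continuous bijection. Then g is open. -/
universe u v w

/-- A map between topological spaces is *nearly open* if the image of every open set is
contained in the interior of the closure of that image. -/
def NearlyOpen {X Y : Type*} [TopologicalSpace X] [TopologicalSpace Y] (f : X → Y) : Prop :=
  ∀ U : Set X, IsOpen U → f '' U ⊆ interior (closure (f '' U))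

/-- A topological space is *semi-regular* if the regular-open sets
(sets `V` with `V = interior (closure V)`) form a base of the topology. -/
def SemiRegular (E : Type*) [TopologicalSpace E] : Prop :=
  ∀ (U : Set E) (x : E), IsOpen U → x ∈ U →
    ∃ V : Set E, V = interior (closure V) ∧ x ∈ V ∧ V ⊆ U

section Tandem

variable {E : Type*} [TopologicalSpace E]

/-- The `n`-th move of a play of the tandem Banach–Mazur game, which is played in
the order `V₁, V₁', W₁, W₁', V₂, V₂', W₂, W₂', …` : player β' chooses the sets `Vᵢ`
(indices `≡ 0 [MOD 4]`) and `Wᵢ` (indices `≡ 2 [MOD 4]`), player α' chooses the sets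
`Vᵢ'` (indices `≡ 1 [MOD 4]`) and `Wᵢ'` (indices `≡ 3 [MOD 4]`). -/
def tandemMove (V V' W W' : ℕ → Set E) (n : ℕ) : Set E :=
  if n % 4 = 0 then V (n / 4)
  else if n % 4 = 1 then V' (n / 4)
  else if n % 4 = 2 then W (n / 4)
  else W' (n / 4)

/-- The history of the first `n` moves of a tandem play (as a function that is `∅`
from index `n` onwards, so that a strategy can only use the past moves). -/
def tandemHist (V V' W W' : ℕ → Set E) (n : ℕ) : ℕ → Set E :=
  fun i => if i < n then tandemMove V V' W W' i else ∅

/-- A legal tandem history of length `n`: all moves are nonempty open sets, the moves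
on the `V`-board (indices `≡ 0, 1 [MOD 4]`) are nested decreasingly, and so are the
moves on the `W`-board (indices `≡ 2, 3 [MOD 4]`). -/
def TandemLegalHist (n : ℕ) (h : ℕ → Set E) : Prop :=
  (∀ i < n, IsOpen (h i) ∧ (h i).Nonempty) ∧
  (∀ i j : ℕ, i < j → j < n → i % 4 < 2 → j % 4 < 2 → h j ⊆ h i) ∧
  (∀ i j : ℕ, i < j → j < n → 2 ≤ i % 4 → 2 ≤ j % 4 → h j ⊆ h i)

/-- A strategy for player β' in the tandem game: to every legal history of even length
it assigns a nonempty open set, contained in the previous move on the same board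
(the first moves `V₁` and `W₁`, at positions `0` and `2`, are unconstrained). -/
def IsTandemBetaStrat (σ : ℕ → (ℕ → Set E) → Set E) : Prop :=
  ∀ (n : ℕ) (h : ℕ → Set E), TandemLegalHist n h → n % 2 = 0 →
    IsOpen (σ n h) ∧ (σ n h).Nonempty ∧ (4 ≤ n → σ n h ⊆ h (n - 3))

/-- A strategy for player α' in the tandem game: to every legal history of odd length
it assigns a nonempty open subset of the immediately preceding move. -/
def IsTandemAlphaStrat (σ : ℕ → (ℕ → Set E) → Set E) : Prop :=
  ∀ (n : ℕ) (h : ℕ → Set E), TandemLegalHist n h → n % 2 = 1 →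
    IsOpen (σ n h) ∧ (σ n h).Nonempty ∧ σ n h ⊆ h (n - 1)

/-- The play `(V, V', W, W')` follows the β'-strategy `σ`. -/
def TandemFollowsBeta (σ : ℕ → (ℕ → Set E) → Set E) (V V' W W' : ℕ → Set E) : Prop :=
  ∀ k : ℕ, V k = σ (4 * k) (tandemHist V V' W W' (4 * k)) ∧
    W k = σ (4 * k + 2) (tandemHist V V' W W' (4 * k + 2))

/-- The play `(V, V', W, W')` follows the α'-strategy `σ`. -/
def TandemFollowsAlpha (σ : ℕ → (ℕ → Set E) → Set E) (V V' W W' : ℕ → Set E) : Prop :=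
  ∀ k : ℕ, V' k = σ (4 * k + 1) (tandemHist V V' W W' (4 * k + 1)) ∧
    W' k = σ (4 * k + 3) (tandemHist V V' W W' (4 * k + 3))

end Tandem

/-- A space is *τ*-Baire* if for every strategy of player β' in the tandem
Banach–Mazur game there is a strategy of player α' which beats it *strongly*:
in their play, every (proper) filter containing all the sets `V k` has a cluster point
in `⋂ k, V k`, and every filter containing all the sets `W k` has a cluster point in
`⋂ k, W k`. -/
def TauStarBaire (E : Type*) [TopologicalSpace E] : Prop :=
  ∀ σβ : ℕ → (ℕ → Set E) → Set E, IsTandemBetaStrat σβ →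
    ∃ σα : ℕ → (ℕ → Set E) → Set E, IsTandemAlphaStrat σα ∧
      ∀ V V' W W' : ℕ → Set E,
        TandemFollowsBeta σβ V V' W W' → TandemFollowsAlpha σα V V' W W' →
        (∀ F : Filter E, F.NeBot → (∀ k, V k ∈ F) → ∃ x ∈ (⋂ k, V k), ClusterPt x F) ∧
        (∀ F : Filter E, F.NeBot → (∀ k, W k ∈ F) → ∃ x ∈ (⋂ k, W k), ClusterPt x F)

open Set Filter Topology

/-- Every rule assigning a next move to a finite history is followed by some infinite play. -/
theorem exists_play_following {α : Type*} (d : α) (σ : ℕ → (ℕ → α) → α) :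
    ∃ m : ℕ → α, ∀ n, m n = σ n (fun i => if i < n then m i else d) := by
  let H : ℕ → ℕ → α :=
    fun n => Nat.rec (fun _ => d) (fun n h => Function.update h n (σ n h)) n
  have hH : ∀ n, H n = fun i => if i < n then σ i (H i) else d := by
    intro n
    induction n with
    | zero => funext i; simp [H]
    | succ n ih =>
      have hs : H (n + 1) = Function.update (H n) n (σ n (H n)) := rfl
      funext i
      rw [hs]
      rcases lt_trichotomy i n with hi | rfl | hi
      · rw [Function.update_of_ne hi.ne, ih]
        simp [hi, hi.trans (Nat.lt_succ_self n)]
      · simp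
      · rw [Function.update_of_ne hi.ne', ih]
        simp [not_lt.2 hi.le, show ¬ i < n + 1 by omega]
  exact ⟨fun n => σ n (H n), fun n => congrArg (σ n) (hH n)⟩

section Play

variable {E : Type*}

theorem tandemMove_of_play (m : ℕ → Set E) (n : ℕ) :
    tandemMove (fun k => m (4 * k)) (fun k => m (4 * k + 1)) (fun k => m (4 * k + 2))
      (fun k => m (4 * k + 3)) n = m n := by
  unfold tandemMove
  split_ifs <;> exact congrArg m (by omega)

theorem tandemHist_of_play (m : ℕ → Set E) (n : ℕ) :
    tandemHist (fun k => m (4 * k)) (fun k => m (4 * k + 1)) (fun k => m (4 * k + 2))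
      (fun k => m (4 * k + 3)) n = fun i => if i < n then m i else ∅ := by
  funext i
  simp only [tandemHist, tandemMove_of_play]

variable [TopologicalSpace E]

/-- All histories of a play following strategies of both players are legal. -/
theorem tandemLegalHist_of_play {σβ σα : ℕ → (ℕ → Set E) → Set E}
    (hβ : IsTandemBetaStrat σβ) (hα : IsTandemAlphaStrat σα) {m : ℕ → Set E}
    (hm : ∀ n, m n = (if n % 2 = 0 then σβ n else σα n) (fun i => if i < n then m i else ∅))
    (n : ℕ) : TandemLegalHist n (fun i => if i < n then m i else ∅) := by
  induction n with
  | zero => exact ⟨by simp, by simp, by simp⟩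
  | succ n ih =>
    have hlast : IsOpen (m n) ∧ (m n).Nonempty ∧ (n % 2 = 1 → m n ⊆ m (n - 1)) ∧
        (n % 2 = 0 → 4 ≤ n → m n ⊆ m (n - 3)) := by
      rcases Nat.mod_two_eq_zero_or_one n with hn | hn
      · obtain ⟨ho, hne, hsub⟩ := hβ n _ ih hn
        have e := hm n
        rw [if_pos hn] at e
        rw [← e] at ho hne hsub
        refine ⟨ho, hne, by omega, fun _ h4 => ?_⟩
        simpa [show n - 3 < n by omega] using hsub h4
      · obtain ⟨ho, hne, hsub⟩ := hα n _ ih hn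
        have e := hm n
        rw [if_neg (by omega)] at e
        rw [← e] at ho hne hsub
        refine ⟨ho, hne, fun _ => ?_, by omega⟩
        simpa [show n - 1 < n by omega] using hsub
    obtain ⟨ho, hne, hodd, heven⟩ := hlast
    obtain ⟨ihon, ihV, ihW⟩ := ih
    refine ⟨fun i hi => ?_, fun i j hij hj hi4 hj4 => ?_, fun i j hij hj hi4 hj4 => ?_⟩
    · simp only [hi, if_true]
      rcases Nat.lt_succ_iff_lt_or_eq.1 hi with h | rfl
      · simpa [h] using ihon i h
      · exact ⟨ho, hne⟩
    · simp only [hj, hij.trans hj, if_true]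
      rcases Nat.lt_succ_iff_lt_or_eq.1 hj with h | rfl
      · simpa [h, hij.trans h] using ihV i j hij h hi4 hj4
      · rcases Nat.mod_two_eq_zero_or_one j with hn | hn
        · refine (heven hn (by omega)).trans ?_
          rcases eq_or_ne i (j - 3) with rfl | hne'
          · rfl
          · simpa [hij, show j - 3 < j by omega] using
              ihV i (j - 3) (by omega) (by omega) hi4 (by omega)
        · refine (hodd hn).trans ?_
          rcases eq_or_ne i (j - 1) with rfl | hne'
          · rfl
          · simpa [hij, show j - 1 < j by omega] using
              ihV i (j - 1) (by omega) (by omega) hi4 (by omega)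
    · simp only [hj, hij.trans hj, if_true]
      rcases Nat.lt_succ_iff_lt_or_eq.1 hj with h | rfl
      · simpa [h, hij.trans h] using ihW i j hij h hi4 hj4
      · rcases Nat.mod_two_eq_zero_or_one j with hn | hn
        · refine (heven hn (by omega)).trans ?_
          rcases eq_or_ne i (j - 3) with rfl | hne'
          · rfl
          · simpa [hij, show j - 3 < j by omega] using
              ihW i (j - 3) (by omega) (by omega) hi4 (by omega)
        · refine (hodd hn).trans ?_
          rcases eq_or_ne i (j - 1) with rfl | hne'
          · rfl
          · simpa [hij, show j - 1 < j by omega] using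
              ihW i (j - 1) (by omega) (by omega) hi4 (by omega)

/-- In a τ*-Baire space every β'-strategy admits a play, presented as a single sequence of
moves, which is strongly won by α'. -/
theorem TauStarBaire.exists_play (hE : TauStarBaire E) {σ : ℕ → (ℕ → Set E) → Set E}
    (hσ : IsTandemBetaStrat σ) :
    ∃ m : ℕ → Set E,
      (∀ n, n % 2 = 0 → m n = σ n (fun i => if i < n then m i else ∅)) ∧
      (∀ n, IsOpen (m n) ∧ (m n).Nonempty) ∧
      (∀ i j, i < j → i % 4 < 2 → j % 4 < 2 → m j ⊆ m i) ∧
      (∀ i j, i < j → 2 ≤ i % 4 → 2 ≤ j % 4 → m j ⊆ m i) ∧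
      (∀ l : Filter E, l.NeBot → (∀ k, m (4 * k) ∈ l) →
        ∃ x ∈ ⋂ k, m (4 * k), ClusterPt x l) ∧
      (∀ l : Filter E, l.NeBot → (∀ k, m (4 * k + 2) ∈ l) →
        ∃ x ∈ ⋂ k, m (4 * k + 2), ClusterPt x l) := by
  obtain ⟨σα, hα, hwin⟩ := hE σ hσ
  obtain ⟨m, hm⟩ := exists_play_following (∅ : Set E)
    (fun n => if n % 2 = 0 then σ n else σα n)
  have hleg := tandemLegalHist_of_play hσ hα hm
  have hβm : ∀ n, n % 2 = 0 → m n = σ n (fun i => if i < n then m i else ∅) := by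
    intro n hn
    have := hm n
    rwa [if_pos hn] at this
  have hαm : ∀ n, n % 2 = 1 → m n = σα n (fun i => if i < n then m i else ∅) := by
    intro n hn
    have := hm n
    rwa [if_neg (by omega)] at this
  refine ⟨m, hβm, fun n => ?_, fun i j hij hi hj => ?_, fun i j hij hi hj => ?_,
    hwin (fun k => m (4 * k)) (fun k => m (4 * k + 1)) (fun k => m (4 * k + 2))
      (fun k => m (4 * k + 3)) (fun k => ?_) (fun k => ?_)⟩
  · simpa using (hleg (n + 1)).1 n (Nat.lt_succ_self n)
  · simpa [show i < j + 1 by omega] using (hleg (j + 1)).2.1 i j hij (Nat.lt_succ_self j) hi hj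
  · simpa [show i < j + 1 by omega] using (hleg (j + 1)).2.2 i j hij (Nat.lt_succ_self j) hi hj
  · simp only [tandemHist_of_play]
    exact ⟨hβm _ (by omega), hβm _ (by omega)⟩
  · simp only [tandemHist_of_play]
    exact ⟨hαm _ (by omega), hαm _ (by omega)⟩

end Play

section NearlyOpen

variable {E F : Type*} [TopologicalSpace E] [TopologicalSpace F]

theorem NearlyOpen.inter_preimage_nonempty {f : E → F} (hf : NearlyOpen f) {A C : Set E}
    (hA : IsOpen A) (hne : A.Nonempty) (h : f '' A ⊆ closure (f '' C)) :
    (C ∩ f ⁻¹' interior (closure (f '' A))).Nonempty := by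
  obtain ⟨a, ha⟩ := hne
  obtain ⟨_, hy, c, hc, rfl⟩ := mem_closure_iff.1 (h (mem_image_of_mem f ha)) _
    isOpen_interior (hf A hA (mem_image_of_mem f ha))
  exact ⟨c, hc, hy⟩

/-- The move that β' intends to make against the history `p`: it shrinks the last move on the
current board to the part lying over the interior of the closure of the image of the last move
on the other board. The two boards start from `A` and `C`. -/
def chaseMove (f : E → F) (A C : Set E) (n : ℕ) (p : ℕ → Set E) : Set E :=
  (if n = 0 then A else if n = 2 then C else p (n - 3)) ∩
    f ⁻¹' interior (closure (f '' if n = 0 then C else p (n - 1)))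

open Classical in
/-- The β'-strategy playing `chaseMove` whenever this is a nonempty set. -/
noncomputable def chaseStrat (f : E → F) (A C : Set E) (n : ℕ) (p : ℕ → Set E) : Set E :=
  if (chaseMove f A C n p).Nonempty then chaseMove f A C n p
  else if n < 4 then univ else p (n - 3)

theorem isTandemBetaStrat_chaseStrat [Nonempty E] {f : E → F} (hf : Continuous f) {A C : Set E}
    (hA : IsOpen A) (hC : IsOpen C) : IsTandemBetaStrat (chaseStrat f A C) := by
  intro n p hp hn
  unfold chaseStrat
  split_ifs with h1 h2
  · refine ⟨IsOpen.inter ?_ (isOpen_interior.preimage hf), h1, fun h4 => ?_⟩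
    · split_ifs
      · exact hA
      · exact hC
      · exact (hp.1 _ (by omega)).1
    · refine inter_subset_left.trans ?_
      rw [if_neg (by omega), if_neg (by omega)]
  · exact ⟨isOpen_univ, univ_nonempty, by omega⟩
  · exact ⟨(hp.1 _ (by omega)).1, (hp.1 _ (by omega)).2, fun _ => subset_rfl⟩

theorem NearlyOpen.exists_mem_eq_of_tauStarBaire [T2Space F] (hE : TauStarBaire E) {f : E → F}
    (hfc : Continuous f) (hf : NearlyOpen f) {A C : Set E} (hA : IsOpen A) (hC : IsOpen C)
    (hne : (A ∩ f ⁻¹' interior (closure (f '' C))).Nonempty) :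
    ∃ x ∈ A, ∃ z ∈ C, f x = f z := by
  have : Nonempty E := hne.to_type
  obtain ⟨m, hm, hon, hV, hW, hwinV, hwinW⟩ :=
    hE.exists_play (isTandemBetaStrat_chaseStrat hfc hA hC)
  have hstep : ∀ n, n % 2 = 0 → (chaseMove f A C n (fun i => if i < n then m i else ∅)).Nonempty →
      m n = chaseMove f A C n (fun i => if i < n then m i else ∅) := by
    intro n hn h
    rw [hm n hn, chaseStrat, if_pos h]
  have hm0 : m 0 = A ∩ f ⁻¹' interior (closure (f '' C)) := by
    rw [hstep 0 rfl (by simpa [chaseMove] using hne)]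
    simp [chaseMove]
  have h10 : m 1 ⊆ m 0 := hV 0 1 (by omega) (by omega) (by omega)
  have hm2 : m 2 = C ∩ f ⁻¹' interior (closure (f '' m 1)) := by
    have : chaseMove f A C 2 (fun i => if i < 2 then m i else ∅) =
        C ∩ f ⁻¹' interior (closure (f '' m 1)) := by simp [chaseMove]
    rw [hstep 2 rfl, this]
    rw [this]
    refine hf.inter_preimage_nonempty (hon 1).1 (hon 1).2 ?_
    rintro _ ⟨y, hy, rfl⟩
    exact interior_subset ((hm0 ▸ h10 hy).2)
  have hmn : ∀ k, m (2 * k + 2) ⊆ f ⁻¹' interior (closure (f '' m (2 * k + 1))) := by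
    intro k
    induction k with
    | zero => exact hm2.subset.trans inter_subset_right
    | succ k ih =>
      have : chaseMove f A C (2 * (k + 1) + 2)
          (fun i => if i < 2 * (k + 1) + 2 then m i else ∅) =
          m (2 * k + 1) ∩ f ⁻¹' interior (closure (f '' m (2 * (k + 1) + 1))) := by
        simp [chaseMove, show 2 * (k + 1) + 2 - 3 = 2 * k + 1 by omega,
          show 2 * k + 1 < 2 * (k + 1) + 2 by omega]
      rw [hstep _ (by omega), this]
      · exact inter_subset_right
      rw [this]
      refine hf.inter_preimage_nonempty (hon _).1 (hon _).2 ?_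
      have hsub : m (2 * (k + 1) + 1) ⊆ m (2 * k + 2) := by
        by_cases hk : (2 * k + 2) % 4 < 2
        · exact hV _ _ (by omega) hk (by omega)
        · exact hW _ _ (by omega) (by omega) (by omega)
      rintro _ ⟨y, hy, rfl⟩
      exact interior_subset (ih (hsub hy))
  have hanti (c : ℕ) (hc : ∀ k, m (4 * (k + 1) + c) ⊆ m (4 * k + c)) :
      Antitone fun k => m (4 * k + c) := antitone_nat_of_succ_le hc
  have hantiV : Antitone fun k => m (4 * k) :=
    hanti 0 fun k => hV _ _ (by omega) (by omega) (by omega)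
  have hantiW : Antitone fun k => m (4 * k + 2) :=
    hanti 2 fun k => hW _ _ (by omega) (by omega) (by omega)
  obtain ⟨x, hx, -⟩ := hwinV (⨅ k, 𝓟 (m (4 * k)))
    (iInf_neBot_of_directed' (Antitone.directed_ge fun i j hij =>
      principal_mono.2 (hantiV hij)) fun k => principal_neBot_iff.2 (hon _).2)
    fun k => mem_iInf_of_mem k (mem_principal_self _)
  rw [mem_iInter] at hx
  have hcl : ∀ k, f x ∈ closure (f '' m (4 * k + 2)) := by
    intro k
    have h1 := hmn (2 * k + 1) (show x ∈ m (2 * (2 * k + 1) + 2) by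
      simpa [show 2 * (2 * k + 1) + 2 = 4 * (k + 1) by ring] using hx (k + 1))
    exact closure_mono (image_mono (hW _ _ (by omega) (by omega) (by omega)))
      (interior_subset h1)
  have hbot : (⨅ k, 𝓟 (m (4 * k + 2)) ⊓ comap f (𝓝 (f x))).NeBot := by
    refine iInf_neBot_of_directed' (Antitone.directed_ge fun i j hij =>
      inf_le_inf_right _ (principal_mono.2 (hantiW hij))) fun k => ?_
    rw [← map_neBot_iff f, Filter.push_pull, map_principal, inf_comm]
    exact mem_closure_iff_clusterPt.1 (hcl k)
  obtain ⟨z, hz, hzc⟩ := hwinW _ hbot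
    fun k => mem_iInf_of_mem k (mem_inf_of_left (mem_principal_self _))
  rw [mem_iInter] at hz
  have htend : Tendsto f (⨅ k, 𝓟 (m (4 * k + 2)) ⊓ comap f (𝓝 (f x))) (𝓝 (f x)) :=
    tendsto_comap.mono_left ((iInf_le _ 0).trans inf_le_right)
  have hfz : ClusterPt (f z) (𝓝 (f x)) := hzc.map hfc.continuousAt htend
  refine ⟨x, (hm0 ▸ hx 0).1, z, ?_, (eq_of_nhds_neBot hfz).symm⟩
  have := hz 0
  rw [show 4 * 0 + 2 = 2 from rfl, hm2] at this
  exact this.1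

end NearlyOpen

/-- Let `E` be a τ*-Baire Hausdorff space and `f : E → F` a continuous nearly open
surjection onto a Hausdorff space `F`. If `f = g ∘ h` with `h : E → G` a continuous
surjection onto a semi-regular Hausdorff space `G` and `g : G → F` a continuous
bijection, then `g` is open. -/
theorem isOpenMap_of_factorization_tauStarBaire (E : Type u) [TopologicalSpace E] [T2Space E]
    (F : Type v) [TopologicalSpace F] [T2Space F]
    (G : Type w) [TopologicalSpace G] [T2Space G]
    (htau : TauStarBaire E) (hG : SemiRegular G)
    (f : E → F) (h : E → G) (g : G → F)
    (hfc : Continuous f) (hfno : NearlyOpen f) (hfs : Function.Surjective f)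
    (hhc : Continuous h) (hhs : Function.Surjective h)
    (hgc : Continuous g) (hgb : Function.Bijective g)
    (hfac : f = g ∘ h) :
    IsOpenMap g := by
  intro O hO
  rw [isOpen_iff_forall_mem_open]
  rintro _ ⟨u, hu, rfl⟩
  obtain ⟨U, hreg, huU, hUO⟩ := hG O u hO hu
  have hUo : IsOpen U := hreg ▸ isOpen_interior
  have himg : f '' (h ⁻¹' U) = g '' U := by
    rw [hfac, image_comp, image_preimage_eq U hhs]
  have hpre : g ⁻¹' interior (closure (g '' U)) ⊆ closure U := by
    intro y hy
    refine mem_closure_iff.2 fun N hN hyN => ?_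
    obtain ⟨e, rfl⟩ := hhs y
    obtain ⟨x, hx, z, hz, hxz⟩ := hfno.exists_mem_eq_of_tauStarBaire htau hfc
      (hN.preimage hhc) (hUo.preimage hhc)
      ⟨e, hyN, by rw [himg, hfac]; exact hy⟩
    rw [hfac] at hxz
    have hxz' : h x = h z := hgb.1 hxz
    exact ⟨h x, hx, hxz' ▸ hz⟩
  refine ⟨interior (closure (g '' U)), ?_, isOpen_interior, ?_⟩
  · intro w hw
    obtain ⟨y, rfl⟩ := hgb.2 w
    have hyU : y ∈ interior (closure U) :=
      interior_maximal hpre (isOpen_interior.preimage hgc) hw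
    exact mem_image_of_mem g (hUO (hreg ▸ hyU))
  · have := hfno _ (hUo.preimage hhc)
    rw [himg] at this
    exact this (mem_image_of_mem g huU)
end

section
/- Let S be a stationary subset of ω₁. Then the space S* = {f ∈ ω₁^ω : sup_n f(n) ∈ S} is τ-Baire. -/
universe u v w

/-- A space is *τ-Baire* if for every strategy of player β' in the tandem
Banach–Mazur game there is a strategy of player α' which beats it, i.e. in their
play both `⋂ k, V k` and `⋂ k, W k` are nonempty. -/
def TauBaire (E : Type*) [TopologicalSpace E] : Prop :=
  ∀ σβ : ℕ → (ℕ → Set E) → Set E, IsTandemBetaStrat σβ →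
    ∃ σα : ℕ → (ℕ → Set E) → Set E, IsTandemAlphaStrat σα ∧
      ∀ V V' W W' : ℕ → Set E,
        TandemFollowsBeta σβ V V' W W' → TandemFollowsAlpha σα V V' W W' →
        (⋂ k, V k).Nonempty ∧ (⋂ k, W k).Nonempty

/-- The first uncountable ordinal `ω₁`, viewed as the set of countable ordinals,
endowed below with the *discrete* topology. -/
def Omega1 : Type 1 :=
  {o : Ordinal.{0} // o < (Cardinal.aleph 1).ord}

noncomputable instance : LinearOrder Omega1 :=
  inferInstanceAs (LinearOrder {o : Ordinal.{0} // o < (Cardinal.aleph 1).ord})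

instance : TopologicalSpace Omega1 := ⊥

instance : DiscreteTopology Omega1 := ⟨rfl⟩

/-- The ordinal underlying an element of `ω₁`. -/
def Omega1.toOrdinal (a : Omega1) : Ordinal.{0} :=
  Subtype.val a

/-- `C ⊆ ω₁` is cofinal (unbounded). -/
def Omega1.IsCofinal (C : Set Omega1) : Prop :=
  ∀ a : Omega1, ∃ c ∈ C, a ≤ c

/-- `C ⊆ ω₁` is closed in the order topology of `ω₁`: it contains every point `a` such
that `C ∩ [0, a)` is nonempty and unbounded below `a`. -/
def Omega1.IsClosed (C : Set Omega1) : Prop :=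
  ∀ a : Omega1, (C ∩ Set.Iio a).Nonempty →
    (∀ b < a, ∃ c ∈ C, b < c ∧ c < a) → a ∈ C

/-- `S ⊆ ω₁` is stationary: it meets every closed cofinal subset of `ω₁`. -/
def Omega1.IsStationary (S : Set Omega1) : Prop :=
  ∀ C : Set Omega1, Omega1.IsCofinal C → Omega1.IsClosed C → (S ∩ C).Nonempty

/-- The space `S* = {f ∈ ω₁^ω : sup_n f n ∈ S}`, a subspace of the product `ω₁^ω`
of countably many copies of discrete `ω₁`. -/
def sStar (S : Set Omega1) : Set (ℕ → Omega1) :=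
  {f | ∃ s ∈ S, (⨆ n, (f n).toOrdinal) = s.toOrdinal}

namespace Omega1

theorem lt_iff_toOrdinal_lt {a b : Omega1} : a < b ↔ a.toOrdinal < b.toOrdinal := Iff.rfl

theorem toOrdinal_lt (a : Omega1) : a.toOrdinal < (Cardinal.aleph 1).ord := a.2

theorem exists_toOrdinal_eq {o : Ordinal.{0}} (h : o < (Cardinal.aleph 1).ord) :
    ∃ a : Omega1, a.toOrdinal = o := ⟨⟨o, h⟩, rfl⟩

instance : WellFoundedLT Omega1 :=
  inferInstanceAs (WellFoundedLT {o : Ordinal.{0} // o < (Cardinal.aleph 1).ord})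

/-- Every countable subset of `ω₁` has a strict upper bound. -/
theorem exists_forall_lt_of_countable {s : Set Omega1} (hs : s.Countable) :
    ∃ c : Omega1, ∀ x ∈ s, x < c := by
  have : Countable s := hs
  have hlim : Order.IsSuccLimit (Cardinal.aleph 1).ord :=
    Cardinal.isSuccLimit_ord (Cardinal.aleph0_le_aleph 1)
  have hlt : (⨆ x : s, x.1.toOrdinal + 1) < (Cardinal.aleph 1).ord := by
    rw [Cardinal.ord_aleph]
    refine Ordinal.iSup_lt_omega_one fun x => ?_
    rw [← Cardinal.ord_aleph]
    exact hlim.add_one_lt x.1.toOrdinal_lt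
  obtain ⟨c, hc⟩ := exists_toOrdinal_eq hlt
  refine ⟨c, fun x hx => ?_⟩
  rw [lt_iff_toOrdinal_lt, hc, ← Order.add_one_le_iff]
  have : Small.{0} s := Countable.toSmall s
  exact Ordinal.le_iSup (fun x : s => x.1.toOrdinal + 1) ⟨x, hx⟩

theorem countable_Iio (a : Omega1) : (Set.Iio a).Countable := by
  have h : (Set.Iio a.toOrdinal).Countable := by
    rw [← Cardinal.le_aleph0_iff_set_countable, Cardinal.mk_Iio_ordinal, Cardinal.lift_le_aleph0,
      ← Cardinal.lt_aleph_one_iff]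
    exact Cardinal.lt_ord.1 a.toOrdinal_lt
  exact h.preimage_of_injOn (f := toOrdinal) Subtype.val_injective.injOn

/-- The ordinals closed under a finitary operation form a closed set. -/
theorem isClosed_setOf_closedUnder (F : List Omega1 → Omega1) :
    Omega1.IsClosed {d | ∀ l : List Omega1, (∀ x ∈ l, x < d) → F l < d} := by
  intro a ha hlim l hl
  obtain ⟨c, hc, hca, hlc⟩ : ∃ c ∈ {d | ∀ l : List Omega1, (∀ x ∈ l, x < d) → F l < d},
      c < a ∧ ∀ x ∈ l, x < c := by
    induction l with
    | nil => exact ⟨ha.some, ha.some_mem.1, ha.some_mem.2, by simp⟩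
    | cons x l ih =>
      obtain ⟨c, hc, hca, hlc⟩ := ih fun y hy => hl y (by simp [hy])
      have hx : max x c < a := max_lt (hl x (by simp)) hca
      obtain ⟨c', hc', hlt, hca'⟩ := hlim _ hx
      refine ⟨c', hc', hca', fun y hy => ?_⟩
      rcases List.mem_cons.1 hy with rfl | hy
      · exact (le_max_left _ _).trans_lt hlt
      · exact (hlc y hy).trans ((le_max_right _ _).trans_lt hlt)
  exact (hc l hlc).trans hca

/-- The ordinals closed under a finitary operation form a cofinal set. -/
theorem isCofinal_setOf_closedUnder (F : List Omega1 → Omega1) :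
    Omega1.IsCofinal {d | ∀ l : List Omega1, (∀ x ∈ l, x < d) → F l < d} := by
  intro a
  have step : ∀ d : Omega1, ∃ e, d < e ∧ ∀ l : List Omega1, (∀ x ∈ l, x < d) → F l < e := by
    intro d
    have hc : {l : List Omega1 | ∀ x ∈ l, x ∈ Set.Iio d}.Countable := by
      have : Countable (Set.Iio d) := countable_Iio d
      rw [← Set.range_list_map_coe]
      exact Set.countable_range _
    obtain ⟨e, he⟩ := exists_forall_lt_of_countable ((hc.image F).insert d)
    exact ⟨e, he d (by simp), fun l hl => he _ (Or.inr ⟨l, hl, rfl⟩)⟩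
  choose next hlt hnext using step
  let d : ℕ → Omega1 := fun n => next^[n] a
  have hsucc : ∀ n, d (n + 1) = next (d n) := fun n => Function.iterate_succ_apply' next n a
  have hmono : StrictMono d := strictMono_nat_of_lt_succ fun n => by
    rw [hsucc]; exact hlt _
  have hne : (upperBounds (Set.range d)).Nonempty := by
    obtain ⟨c, hc⟩ := exists_forall_lt_of_countable (Set.countable_range d)
    exact ⟨c, fun x hx => (hc x hx).le⟩
  obtain ⟨e, he, hmin⟩ := WellFounded.has_min (wellFounded_lt (α := Omega1)) _ hne
  have hde : ∀ n, d n < e := fun n => (hmono n.lt_succ_self).trans_le (he ⟨_, rfl⟩)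
  have hlte : ∀ x < e, ∃ n, x < d n := by
    intro x hx
    by_contra! h
    exact hmin x (by rintro _ ⟨n, rfl⟩; exact h n) hx
  refine ⟨e, fun l hl => ?_, (hde 0).le⟩
  obtain ⟨n, hn⟩ : ∃ n, ∀ x ∈ l, x < d n := by
    induction l with
    | nil => exact ⟨0, by simp⟩
    | cons x l ih =>
      obtain ⟨n, hn⟩ := ih fun y hy => hl y (by simp [hy])
      obtain ⟨k, hk⟩ := hlte x (hl x (by simp))
      refine ⟨max n k, fun y hy => ?_⟩
      rcases List.mem_cons.1 hy with rfl | hy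
      · exact hk.trans_le (hmono.monotone (le_max_right _ _))
      · exact (hn y hy).trans_le (hmono.monotone (le_max_left _ _))
  exact ((hnext (d n) l hn).trans_eq (hsucc n).symm).trans (hde _)

/-- A stationary set contains an ordinal closed under any given finitary operation. -/
theorem IsStationary.exists_closedUnder {S : Set Omega1} (hS : IsStationary S)
    (F : List Omega1 → Omega1) :
    ∃ d ∈ S, ∀ l : List Omega1, (∀ x ∈ l, x < d) → F l < d :=
  hS _ (isCofinal_setOf_closedUnder F) (isClosed_setOf_closedUnder F)

theorem IsStationary.isCofinal {S : Set Omega1} (hS : IsStationary S) : Omega1.IsCofinal S := by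
  intro a
  obtain ⟨d, hd, hcl⟩ := hS.exists_closedUnder fun _ => a
  exact ⟨d, hd, (hcl [] (by simp)).le⟩

end Omega1

section Play

variable {E : Type*} {σβ σα : ℕ → (ℕ → Set E) → Set E} {V V' W W' : ℕ → Set E}

theorem tandemMove_of_even (hβ : TandemFollowsBeta σβ V V' W W') {n : ℕ} (hn : n % 2 = 0) :
    tandemMove V V' W W' n = σβ n (tandemHist V V' W W' n) := by
  obtain ⟨k, rfl | rfl⟩ : ∃ k, n = 4 * k ∨ n = 4 * k + 2 := ⟨n / 4, by omega⟩
  · rw [← (hβ k).1]; simp [tandemMove]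
  · rw [← (hβ k).2]
    simp [tandemMove, show (4 * k + 2) / 4 = k by omega]

theorem tandemMove_of_odd (hα : TandemFollowsAlpha σα V V' W W') {n : ℕ} (hn : n % 2 = 1) :
    tandemMove V V' W W' n = σα n (tandemHist V V' W W' n) := by
  obtain ⟨k, rfl | rfl⟩ : ∃ k, n = 4 * k + 1 ∨ n = 4 * k + 3 := ⟨n / 4, by omega⟩
  · rw [← (hα k).1]
    simp [tandemMove, show (4 * k + 1) / 4 = k by omega]
  · rw [← (hα k).2]
    simp [tandemMove, show (4 * k + 3) / 4 = k by omega]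

/-- The history in which β' follows `σβ` and α' answers its `k`-th challenge `U` by `ρ k U a`,
where the labels `a` are taken from the given list, most recent first. -/
def labelledHist {A : Type*} (σβ : ℕ → (ℕ → Set E) → Set E) (ρ : ℕ → Set E → A → Set E) :
    List A → ℕ → Set E
  | [] => fun _ => ∅
  | a :: l => fun i =>
    if i < 2 * l.length then labelledHist σβ ρ l i
    else if i = 2 * l.length then σβ (2 * l.length) (labelledHist σβ ρ l)
    else if i = 2 * l.length + 1 then
      ρ l.length (σβ (2 * l.length) (labelledHist σβ ρ l)) a
    else ∅

theorem tandemHist_eq_labelledHist {A : Type*} {ρ : ℕ → Set E → A → Set E} {c : ℕ → A}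
    (hβ : TandemFollowsBeta σβ V V' W W')
    (hα : TandemFollowsAlpha (fun n h => ρ (n / 2) (h (n - 1)) (c (n / 2))) V V' W W') (k : ℕ) :
    tandemHist V V' W W' (2 * k) = labelledHist σβ ρ ((List.range k).map c).reverse := by
  induction k with
  | zero => funext i; simp [tandemHist, labelledHist]
  | succ k ih =>
    have heven := tandemMove_of_even hβ (n := 2 * k) (by omega)
    have hodd := tandemMove_of_odd hα (n := 2 * k + 1) (by omega)
    have hprev : tandemHist V V' W W' (2 * k + 1) (2 * k) = tandemMove V V' W W' (2 * k) :=
      if_pos (by omega)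
    simp only [show (2 * k + 1) / 2 = k by omega, Nat.add_sub_cancel, hprev] at hodd
    rw [heven] at hodd
    simp only [List.range_succ, List.map_append, List.map_cons, List.map_nil, List.reverse_append,
      List.reverse_cons, List.reverse_nil, List.nil_append, List.cons_append, labelledHist,
      List.length_reverse, List.length_map, List.length_range]
    funext i
    rw [← ih]
    rcases lt_trichotomy i (2 * k) with h | rfl | h
    · simp [tandemHist, h, show i < 2 * (k + 1) by omega]
    · rw [tandemHist]
      simpa [show 2 * k < 2 * (k + 1) by omega] using heven
    · by_cases h1 : i = 2 * k + 1
      · subst h1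
        rw [tandemHist]
        simpa [show 2 * k + 1 < 2 * (k + 1) by omega] using hodd
      · simp [tandemHist, h1, show ¬ i < 2 * (k + 1) by omega, show ¬ i < 2 * k by omega,
          show ¬ i = 2 * k by omega]

variable [TopologicalSpace E]

theorem TandemLegalHist.congr {n : ℕ} {h h' : ℕ → Set E} (hh : TandemLegalHist n h)
    (heq : ∀ i < n, h' i = h i) : TandemLegalHist n h' := by
  refine ⟨fun i hi => ?_, fun i j hij hj => ?_, fun i j hij hj => ?_⟩
  · rw [heq i hi]; exact hh.1 i hi
  · rw [heq i (hij.trans hj), heq j hj]; exact hh.2.1 i j hij hj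
  · rw [heq i (hij.trans hj), heq j hj]; exact hh.2.2 i j hij hj

theorem TandemLegalHist.succ {n : ℕ} {h : ℕ → Set E} (hh : TandemLegalHist n h)
    (ho : IsOpen (h n)) (hne : (h n).Nonempty)
    (hodd : n % 2 = 1 → h n ⊆ h (n - 1)) (heven : n % 2 = 0 → 4 ≤ n → h n ⊆ h (n - 3)) :
    TandemLegalHist (n + 1) h := by
  have key : ∀ i < n, (i % 4 < 2 ↔ n % 4 < 2) → h n ⊆ h i := by
    intro i hi hb
    obtain ⟨k, hk, hik, hkb, hsub⟩ : ∃ k < n, i ≤ k ∧ (k % 4 < 2 ↔ n % 4 < 2) ∧ h n ⊆ h k := by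
      rcases Nat.mod_two_eq_zero_or_one n with h0 | h1
      · exact ⟨n - 3, by omega, by omega, by omega, heven h0 (by omega)⟩
      · exact ⟨n - 1, by omega, by omega, by omega, hodd h1⟩
    rcases hik.eq_or_lt with rfl | hlt
    · exact hsub
    by_cases hi2 : i % 4 < 2
    · exact hsub.trans (hh.2.1 i k hlt hk hi2 (by omega))
    · exact hsub.trans (hh.2.2 i k hlt hk (by omega) (by omega))
  refine ⟨fun i hi => ?_, fun i j hij hj hi2 hj2 => ?_, fun i j hij hj hi2 hj2 => ?_⟩
  · rcases (Nat.lt_succ_iff.1 hi).eq_or_lt with rfl | hlt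
    · exact ⟨ho, hne⟩
    · exact hh.1 i hlt
  · rcases (Nat.lt_succ_iff.1 hj).eq_or_lt with rfl | hlt
    · exact key i hij (by omega)
    · exact hh.2.1 i j hij hlt hi2 hj2
  · rcases (Nat.lt_succ_iff.1 hj).eq_or_lt with rfl | hlt
    · exact key i hij (by omega)
    · exact hh.2.2 i j hij hlt hi2 hj2

/-- A play following strategies of both players is legal. -/
theorem tandemLegalHist_tandemMove (hσβ : IsTandemBetaStrat σβ) (hσα : IsTandemAlphaStrat σα)
    (hβ : TandemFollowsBeta σβ V V' W W') (hα : TandemFollowsAlpha σα V V' W W') (n : ℕ) :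
    TandemLegalHist n (tandemMove V V' W W') := by
  induction n with
  | zero => exact ⟨by simp, by simp, by simp⟩
  | succ n ih =>
    have hhist : ∀ i < n, tandemHist V V' W W' n i = tandemMove V V' W W' i :=
      fun i hi => if_pos hi
    have hl := ih.congr hhist
    rcases Nat.mod_two_eq_zero_or_one n with h0 | h1
    · obtain ⟨ho, hne, hsub⟩ := hσβ n _ hl h0
      rw [← tandemMove_of_even hβ h0] at ho hne hsub
      refine ih.succ ho hne (by omega) fun _ h4 => ?_
      rw [← hhist (n - 3) (by omega)]
      exact hsub h4
    · obtain ⟨ho, hne, hsub⟩ := hσα n _ hl h1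
      rw [← tandemMove_of_odd hα h1] at ho hne hsub
      refine ih.succ ho hne (fun _ => ?_) (by omega)
      rw [← hhist (n - 1) (by omega)]
      exact hsub

end Play

section Cylinder

/-- The basic open set of points of `S*` agreeing with `f` on the first `m` coordinates. -/
def cylinder (S : Set Omega1) (m : ℕ) (f : ℕ → Omega1) : Set (sStar S) :=
  {x | ∀ i < m, x.1 i = f i}

variable {S : Set Omega1}

theorem isOpen_cylinder (m : ℕ) (f : ℕ → Omega1) : IsOpen (cylinder S m f) := by
  have : cylinder S m f =
      ⋂ i ∈ Set.Iio m, (fun x : sStar S => x.1 i) ⁻¹' {f i} := by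
    ext x; simp [cylinder]
  rw [this]
  refine (Set.finite_Iio m).isOpen_biInter fun i _ => ?_
  exact (isOpen_discrete _).preimage ((continuous_apply i).comp continuous_subtype_val)

theorem iSup_toOrdinal_eq {f : ℕ → Omega1} {d : Omega1} (hle : ∀ i, f i ≤ d)
    (hcof : ∀ x < d, ∃ i, x < f i) : ⨆ n, (f n).toOrdinal = d.toOrdinal := by
  refine le_antisymm (Ordinal.iSup_le hle) ?_
  by_contra! hlt
  obtain ⟨c, hc⟩ := Omega1.exists_toOrdinal_eq (hlt.trans d.toOrdinal_lt)
  rw [← hc] at hlt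
  obtain ⟨i, hi⟩ := hcof c hlt
  have hfi := Ordinal.le_iSup (fun n => (f n).toOrdinal) i
  rw [← hc] at hfi
  exact absurd hi (not_lt.2 hfi)

theorem nonempty_cylinder (hS : Omega1.IsStationary S) (m : ℕ) (f : ℕ → Omega1) :
    (cylinder S m f).Nonempty := by
  obtain ⟨c, hc⟩ := Omega1.exists_forall_lt_of_countable (Set.countable_range f)
  obtain ⟨s, hs, hcs⟩ := hS.isCofinal c
  refine ⟨⟨fun i => if i < m then f i else s, s, hs, iSup_toOrdinal_eq (fun i => ?_) ?_⟩, ?_⟩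
  · split_ifs
    · exact ((hc _ ⟨i, rfl⟩).trans_le hcs).le
    · exact le_rfl
  · exact fun x hx => ⟨m, by simpa using hx⟩
  · exact fun i hi => if_pos hi

theorem exists_cylinder_subset {U : Set (sStar S)} (ho : IsOpen U) (hne : U.Nonempty) (N : ℕ) :
    ∃ p : ℕ × (ℕ → Omega1), N ≤ p.1 ∧ cylinder S p.1 p.2 ⊆ U := by
  obtain ⟨x, hx⟩ := hne
  obtain ⟨O, hO, rfl⟩ := isOpen_induced_iff.1 ho
  obtain ⟨I, u, hu, hsub⟩ := isOpen_pi_iff.1 hO x.1 hx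
  obtain ⟨M, hM⟩ := I.bddAbove
  refine ⟨(max N (M + 1), x.1), le_max_left _ _, fun y hy => hsub fun i hi => ?_⟩
  rw [hy i (lt_max_of_lt_right (Nat.lt_succ_of_le (hM hi)))]
  exact (hu i hi).2

/-- If the defining sequences of a decreasing chain of cylinders have entries below `d ∈ S` and
jointly exhaust `d`, then the chain has a common point. -/
theorem nonempty_iInter_cylinder (hS : Omega1.IsStationary S) {d : Omega1} (hd : d ∈ S)
    (m : ℕ → ℕ) (g : ℕ → ℕ → Omega1) (hm : ∀ k, k < m k)
    (hanti : Antitone fun k => cylinder S (m k) (g k)) (hlt : ∀ k, ∀ i < m k, g k i < d)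
    (hcof : ∀ x < d, ∃ k, ∃ i < m k, x < g k i) :
    (⋂ k, cylinder S (m k) (g k)).Nonempty := by
  have hagree : ∀ k k' i, k ≤ k' → i < m k → i < m k' → g k i = g k' i := by
    intro k k' i hk hi hi'
    obtain ⟨x, hx⟩ := nonempty_cylinder hS (m k') (g k')
    rw [← hx i hi', ← hanti hk hx i hi]
  have hdiag : ∀ k i, i < m k → g i i = g k i := by
    intro k i hi
    rcases le_total k i with h | h
    · exact (hagree k i i h hi (hm i)).symm
    · exact hagree i k i h (hm i) hi
  refine ⟨⟨fun i => g i i, d, hd, iSup_toOrdinal_eq (fun i => (hlt i i (hm i)).le) ?_⟩, ?_⟩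
  · intro x hx
    obtain ⟨k, i, hi, hxi⟩ := hcof x hx
    exact ⟨i, by rwa [hdiag k i hi]⟩
  · exact Set.mem_iInter.2 fun k i hi => hdiag k i hi

end Cylinder

/-- If `S` is a stationary subset of `ω₁`, then the space `S*` is τ-Baire. -/
theorem tauBaire_sStar_of_isStationary (S : Set Omega1) (hS : Omega1.IsStationary S) :
    TauBaire ↥(sStar S) := by
  intro σβ hσβ
  have hreply : ∀ (N : ℕ) (U : Set (sStar S)) (a : Omega1), ∃ p : ℕ × (ℕ → Omega1),
      (IsOpen U → U.Nonempty → cylinder S p.1 p.2 ⊆ U) ∧ N < p.1 ∧ ∃ i < p.1, p.2 i = a := by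
    intro N U a
    by_cases hU : IsOpen U ∧ U.Nonempty
    · obtain ⟨⟨m, f⟩, hm, hsub⟩ := exists_cylinder_subset hU.1 hU.2 N
      refine ⟨(m + 1, Function.update f m a), fun _ _ x hx => hsub fun i hi => ?_,
        Nat.lt_succ_of_le hm, m, m.lt_succ_self, by simp⟩
      rw [hx i (hi.trans m.lt_succ_self)]
      exact Function.update_of_ne hi.ne _ _
    · exact ⟨(N + 1, fun _ => a), fun h1 h2 => absurd ⟨h1, h2⟩ hU, N.lt_succ_self, N,
        N.lt_succ_self, rfl⟩
  choose R hRsub hRlt hRlabel using hreply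
  let ρ : ℕ → Set (sStar S) → Omega1 → Set (sStar S) :=
    fun N U a => cylinder S (R N U a).1 (R N U a).2
  let U : List Omega1 → Set (sStar S) := fun l => σβ (2 * l.length) (labelledHist σβ ρ l)
  have hbound : ∀ l : List Omega1, ∃ c : Omega1, ∀ a l', l = a :: l' →
      ∀ i, (R l'.length (U l') a).2 i < c := by
    rintro (_ | ⟨a, l⟩)
    · obtain ⟨c, -⟩ := Omega1.exists_forall_lt_of_countable Set.countable_empty
      exact ⟨c, by simp⟩
    · obtain ⟨c, hc⟩ := Omega1.exists_forall_lt_of_countable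
        (Set.countable_range (R l.length (U l) a).2)
      refine ⟨c, ?_⟩
      rintro a' l' h i
      obtain ⟨rfl, rfl⟩ := List.cons.inj h
      exact hc _ ⟨i, rfl⟩
  choose F hF using hbound
  obtain ⟨d, hdS, hd⟩ := hS.exists_closedUnder F
  have hentry : ∀ a < d, ∀ l : List Omega1, (∀ x ∈ l, x < d) →
      ∀ i, (R l.length (U l) a).2 i < d := fun a ha l hl i =>
    (hF (a :: l) a l rfl i).trans (hd _ (by simpa using ⟨ha, hl⟩))
  obtain ⟨b, hb⟩ : ∃ b : ℕ → Omega1, Set.Iio d = Set.range b :=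
    (Omega1.countable_Iio d).exists_eq_range ⟨F [], hd [] (by simp)⟩
  have hbd : ∀ k, b k < d := fun k => by
    have : b k ∈ Set.Iio d := hb ▸ ⟨k, rfl⟩
    exact this
  have hbcof : ∀ x < d, ∃ k, x < b k := by
    intro x hx
    obtain ⟨i, -, hi⟩ := hRlabel 0 (U []) x
    have hlt : x < F [x] := by
      have := hF [x] x [] rfl i
      rwa [List.length_nil, hi] at this
    have hmem : F [x] ∈ Set.Iio d := hd [x] (by simpa using hx)
    rw [hb] at hmem
    obtain ⟨k, hk⟩ := hmem
    exact ⟨k, hk ▸ hlt⟩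
  let c : ℕ → Omega1 := fun k => b (k / 2)
  let σα : ℕ → (ℕ → Set (sStar S)) → Set (sStar S) :=
    fun n h => ρ (n / 2) (h (n - 1)) (c (n / 2))
  have hσα : IsTandemAlphaStrat σα := by
    intro n h hl hn
    obtain ⟨ho, hne⟩ := hl.1 (n - 1) (by omega)
    exact ⟨isOpen_cylinder _ _, nonempty_cylinder hS _ _, hRsub _ _ _ ho hne⟩
  refine ⟨σα, hσα, fun V V' W W' hβ hα => ?_⟩
  have hlegal := tandemLegalHist_tandemMove hσβ hσα hβ hα
  let M := tandemMove V V' W W'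
  let L : ℕ → List Omega1 := fun k => ((List.range k).map c).reverse
  have hL : ∀ k, ∀ x ∈ L k, x < d := by
    intro k x hx
    simp only [L, List.mem_reverse, List.mem_map] at hx
    obtain ⟨j, -, rfl⟩ := hx
    exact hbd _
  have hLlen : ∀ k, (L k).length = k := fun k => by simp [L]
  have hMeven : ∀ k, M (2 * k) = U (L k) := by
    intro k
    have := tandemMove_of_even hβ (n := 2 * k) (by omega)
    rw [tandemHist_eq_labelledHist hβ hα] at this
    simpa only [U, hLlen] using this
  have hModd : ∀ k, M (2 * k + 1) = ρ k (U (L k)) (c k) := by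
    intro k
    have := tandemMove_of_odd hα (n := 2 * k + 1) (by omega)
    have hprev : tandemHist V V' W W' (2 * k + 1) (2 * k) = M (2 * k) := if_pos (by omega)
    simp only [σα, show (2 * k + 1) / 2 = k by omega, Nat.add_sub_cancel, hprev, hMeven] at this
    exact this
  /- The even (`e = 0`) and odd (`e = 1`) rounds are the rounds of the two boards. -/
  have hboard : ∀ e < 2, (⋂ k, M (4 * k + 2 * e)).Nonempty := by
    intro e he
    have hcyl : ∀ k, M (4 * k + 2 * e + 1) =
        cylinder S (R (2 * k + e) (U (L (2 * k + e))) (b k)).1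
          (R (2 * k + e) (U (L (2 * k + e))) (b k)).2 := by
      intro k
      have := hModd (2 * k + e)
      rwa [show 2 * (2 * k + e) + 1 = 4 * k + 2 * e + 1 by ring,
        show c (2 * k + e) = b k by simp only [c]; congr 1; omega] at this
    have hsub : ∀ i j, i < j → (i % 4 < 2 ↔ j % 4 < 2) → M j ⊆ M i := by
      intro i j hij hb
      by_cases hi : i % 4 < 2
      · exact (hlegal (j + 1)).2.1 i j hij j.lt_succ_self hi (hb.1 hi)
      · exact (hlegal (j + 1)).2.2 i j hij j.lt_succ_self (by omega) (by omega)
    have hne := nonempty_iInter_cylinder hS hdS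
      (fun k => (R (2 * k + e) (U (L (2 * k + e))) (b k)).1)
      (fun k => (R (2 * k + e) (U (L (2 * k + e))) (b k)).2)
      (fun k => lt_of_le_of_lt (by omega) (hRlt (2 * k + e) _ _))
      (antitone_nat_of_succ_le fun k => by
        rw [← hcyl, ← hcyl]
        exact hsub _ _ (by omega) (by omega))
      (fun k i _ => by
        have := hentry (b k) (hbd k) (L (2 * k + e)) (hL _) i
        rwa [hLlen] at this)
      (fun x hx => by
        obtain ⟨k, hk⟩ := hbcof x hx
        obtain ⟨i, hi, hib⟩ := hRlabel (2 * k + e) (U (L (2 * k + e))) (b k)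
        exact ⟨k, i, hi, hk.trans_eq hib.symm⟩)
    refine hne.mono (Set.iInter_mono fun k => ?_)
    rw [← hcyl]
    exact hsub _ _ (by omega) (by omega)
  constructor
  · simpa [M, tandemMove] using hboard 0 (by omega)
  · simpa [M, tandemMove, show ∀ k, (4 * k + 2) / 4 = k by omega] using hboard 1 (by omega)
end
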